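/- Let V be an n×n orthogonal real matrix with columns v₁, …, vₙ, let Σ = diag(σ₁, …, σₙ) with all σᵢ > 0, and let A = V Σ Vᵗ. Fix γ > 0, a constant stepsize α ∈ ℝ, and b ∈ ℝⁿ, and let (x^{[k]}) be generated by x^{[0]} = 0 and (I + γ AᵗA) x^{[k+1]} = (I − α A) x^{[k]} + α b + γ Aᵗ b. Then for every k ≥ 1 the k-th iterate has the filtered singular-value expansion x^{[k]} = Σ_{i=1}^{n} φᵢ^{[k]} · ((vᵢᵗ b)/σᵢ) · vᵢ, where the filter factors are φᵢ^{[k]} = ((α σᵢ + γ σᵢ²)/(1 + γ σᵢ²)) · Σ_{ℓ=0}^{k−1} ((1 − α σᵢ)/(1 + γ σᵢ²))^ℓ. -/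

import Mathlib

open Matrix

/-- Filtered singular-value expansion of the stabilized gradient
iterates: if `V` is orthogonal with columns `vᵢ`, `A = V (diagonal σ) Vᵀ` with all
`σ i > 0`, and `(x^k)` is the stabilized sequence from `x⁰ = 0` with constant stepsize
`α` and parameter `γ > 0`, then for all `k ≥ 1`,
`x^k = Σᵢ φᵢ^{[k]} ((vᵢᵗb)/σᵢ) vᵢ` with filter factors
`φᵢ^{[k]} = ((ασᵢ + γσᵢ²)/(1 + γσᵢ²)) Σ_{ℓ<k} ((1 − ασᵢ)/(1 + γσᵢ²))^ℓ`. -/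
theorem stmt12 (n : ℕ) (A V : Matrix (Fin n) (Fin n) ℝ) (σ : Fin n → ℝ)
    (hV : V * Vᵀ = 1 ∧ Vᵀ * V = 1) (hσ : ∀ i, 0 < σ i)
    (hA : A = V * Matrix.diagonal σ * Vᵀ)
    (γ : ℝ) (hγ : 0 < γ) (α : ℝ) (b : Fin n → ℝ)
    (x : ℕ → (Fin n → ℝ)) (hx0 : x 0 = 0)
    (hrec : ∀ k, (1 + γ • (Aᵀ * A)).mulVec (x (k + 1)) =
      (1 - α • A).mulVec (x k) + α • b + γ • Aᵀ.mulVec b) :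
    ∀ k : ℕ, 1 ≤ k →
      x k = ∑ i : Fin n,
        ((((α * σ i + γ * σ i ^ 2) / (1 + γ * σ i ^ 2)) *
            ∑ ℓ ∈ Finset.range k, ((1 - α * σ i) / (1 + γ * σ i ^ 2)) ^ ℓ) *
          ((Vᵀ i ⬝ᵥ b) / σ i)) • Vᵀ i := by
  have hsym : Aᵀ = A := by
    rw [hA]
    simp [Matrix.transpose_mul, Matrix.mul_assoc]
  have key : ∀ (w : Fin n → ℝ) (i : Fin n),
      (Vᵀ *ᵥ (A *ᵥ w)) i = σ i * (Vᵀ *ᵥ w) i := by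
    intro w i
    have h : Vᵀ * A = Matrix.diagonal σ * Vᵀ := by
      rw [hA, Matrix.mul_assoc, ← Matrix.mul_assoc, hV.2, Matrix.one_mul]
    rw [Matrix.mulVec_mulVec, h, ← Matrix.mulVec_mulVec, Matrix.mulVec_diagonal]
  have hcoord : ∀ (k : ℕ) (i : Fin n), (Vᵀ *ᵥ x k) i =
      (((α * σ i + γ * σ i ^ 2) / (1 + γ * σ i ^ 2)) *
            ∑ ℓ ∈ Finset.range k, ((1 - α * σ i) / (1 + γ * σ i ^ 2)) ^ ℓ) *
          ((Vᵀ i ⬝ᵥ b) / σ i) := by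
    intro k i
    induction k with
    | zero => simp [hx0]
    | succ k ih =>
      have h := congrFun (congrArg (fun w => Vᵀ *ᵥ w) (hrec k)) i
      simp only [hsym, Matrix.add_mulVec, Matrix.sub_mulVec, Matrix.one_mulVec,
        Matrix.smul_mulVec, ← Matrix.mulVec_mulVec, Matrix.mulVec_add, Matrix.mulVec_sub,
        Matrix.mulVec_smul, Pi.add_apply, Pi.sub_apply, Pi.smul_apply, smul_eq_mul, key] at h
      have hb : (Vᵀ *ᵥ b) i = Vᵀ i ⬝ᵥ b := rfl
      rw [hb, ih] at h
      have hs := hσ i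
      have hd : 0 < 1 + γ * σ i ^ 2 := by positivity
      rw [Finset.sum_range_succ']
      simp only [pow_succ, ← Finset.sum_mul] at h ⊢
      simp only [← pow_two, pow_zero, one_mul] at h ⊢
      generalize (∑ ℓ ∈ Finset.range k, _ : ℝ) = S at h ⊢
      generalize (Vᵀ *ᵥ x (k + 1)) i = y at h ⊢
      generalize Vᵀ i ⬝ᵥ b = β at h ⊢
      have h' : y * (1 + γ * σ i ^ 2) = y + γ * (σ i * (σ i * y)) := by ring
      rw [← eq_div_iff hd.ne'] at h'
      rw [h', h]
      field_simp
      ring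
  intro k _
  have hx : x k = V *ᵥ (Vᵀ *ᵥ x k) := by
    rw [Matrix.mulVec_mulVec, hV.1, Matrix.one_mulVec]
  rw [hx, Matrix.mulVec_eq_sum]
  refine Finset.sum_congr rfl fun i _ => ?_
  rw [hcoord k i]
  exact op_smul_eq_smul _ _
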